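/- Let ∂V = E⁺ ⊔ E⁻ be a partition of the discrete boundary. Then for every killing function k : V → [0,1] and every w ∈ V: H^k(w,E⁺) + κ^k(w) ≥ H^0(w,E⁺), i.e. the massive harmonic measure of E⁺ plus the killing probability dominates the massless harmonic measure of E⁺. -/

import Mathlib

/-!
All walk sums are rewritten as sums over all lists of vertices, with a summand that vanishes off
the relevant walks (`exitTerm`, `killTerm`). Splitting off the first vertex turns these summands
into one-step recursions, so `H` and the killing probability satisfy, for `w ∈ V`,
`H k w = (1 - k w) / 6 * ∑ H k w'` and `κ w = k w + (1 - k w) / 6 * ∑ κ w'`,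
the sums running over the six neighbours `w'` of `w`.

For the massless measure the exit walks with at most `n` vertices are used, whose total mass `Hₙ`
satisfies `Hₙ₊₁ w = 1 / 6 * ∑ Hₙ w'` for `w ∈ V`. Off `V` only the one-vertex walk can be an exit
walk, and its weight does not depend on the killing. Induction on `n` gives `Hₙ ≤ 1`, and then `Hₙ ≤ H k + κ`:
writing `1 / 6 = (1 - k w) / 6 + k w / 6`, the first part is controlled by the induction
hypothesis, and the second is at most `k w` because the six values of `Hₙ` are at most `1`.
Letting `n → ∞` proves the claim.
-/

open scoped ENNReal

namespace MassiveHE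

/-- Neighbour offsets of the triangular lattice realized on `ℤ²`. -/
def offsets : Finset (ℤ × ℤ) := {(1,0), (-1,0), (0,1), (0,-1), (1,-1), (-1,1)}

/-- Adjacency relation of the triangular lattice. -/
def Adj (p q : ℤ × ℤ) : Prop := (p.1 - q.1, p.2 - q.2) ∈ offsets

/-- Discrete boundary of `V`: vertices outside `V` adjacent to some vertex of `V`. -/
def bdry (V : Set (ℤ × ℤ)) : Set (ℤ × ℤ) :=
  {w | w ∉ V ∧ ∃ v ∈ V, Adj v w}

/-- An exit walk from `w`: consecutive vertices adjacent, all vertices but the last in `V`,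
and the last vertex in `E`. -/
def IsExitWalk (V E : Set (ℤ × ℤ)) (w : ℤ × ℤ) (l : List (ℤ × ℤ)) : Prop :=
  l.head? = some w ∧ l.Chain' Adj ∧ (∀ x ∈ l.dropLast, x ∈ V) ∧ ∃ b ∈ E, l.getLast? = some b

/-- A killed walk from `w`: consecutive vertices adjacent, all vertices in `V`. -/
def IsKillWalk (V : Set (ℤ × ℤ)) (w : ℤ × ℤ) (l : List (ℤ × ℤ)) : Prop :=
  l.head? = some w ∧ l.Chain' Adj ∧ ∀ x ∈ l, x ∈ V

/-- Weight of a walk under the killing function `k`. -/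
noncomputable def wt (k : ℤ × ℤ → ℝ) (l : List (ℤ × ℤ)) : ℝ≥0∞ :=
  (l.dropLast.map (fun x => ENNReal.ofReal ((1 - k x) / 6))).prod

/-- Discrete massive harmonic measure of `E` seen from `w` with killing function `k`. -/
noncomputable def H (V : Set (ℤ × ℤ)) (k : ℤ × ℤ → ℝ) (w : ℤ × ℤ)
    (E : Set (ℤ × ℤ)) : ℝ≥0∞ :=
  ∑' l : {l : List (ℤ × ℤ) // IsExitWalk V E w l}, wt k l

/-- Killing probability: the walk dies at the last vertex of a path staying in `V`. -/
noncomputable def killProb (V : Set (ℤ × ℤ)) (k : ℤ × ℤ → ℝ) (w : ℤ × ℤ) : ℝ≥0∞ :=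
  ∑' l : {l : List (ℤ × ℤ) // IsKillWalk V w l},
    wt k l.1 * ENNReal.ofReal (k (l.1.getLastD (0, 0)))

open Classical in
/-- The contribution of the list `l` to `H V k w E`, zero if `l` is not an exit walk from `w`. -/
noncomputable def exitTerm (V : Set (ℤ × ℤ)) (k : ℤ × ℤ → ℝ) (E : Set (ℤ × ℤ)) (w : ℤ × ℤ)
    (l : List (ℤ × ℤ)) : ℝ≥0∞ :=
  if IsExitWalk V E w l then wt k l else 0

open Classical in
/-- The contribution of the list `l` to `killProb V k w`, zero if `l` is not a killed walk
from `w`. -/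
noncomputable def killTerm (V : Set (ℤ × ℤ)) (k : ℤ × ℤ → ℝ) (w : ℤ × ℤ)
    (l : List (ℤ × ℤ)) : ℝ≥0∞ :=
  if IsKillWalk V w l then wt k l * ENNReal.ofReal (k (l.getLastD (0, 0))) else 0

/-- The mass of the exit walks from `w` with at most `n` vertices. -/
noncomputable def truncH (V : Set (ℤ × ℤ)) (k : ℤ × ℤ → ℝ) (E : Set (ℤ × ℤ)) (n : ℕ)
    (w : ℤ × ℤ) : ℝ≥0∞ :=
  ∑' l : List (ℤ × ℤ), if l.length ≤ n then exitTerm V k E w l else 0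

variable {V E : Set (ℤ × ℤ)} {k : ℤ × ℤ → ℝ} {w : ℤ × ℤ}

lemma H_eq_tsum : H V k w E = ∑' l, exitTerm V k E w l := by
  classical
  unfold H
  refine (tsum_subtype {l | IsExitWalk V E w l} (fun l => wt k l)).trans ?_
  refine tsum_congr fun l => ?_
  simp [exitTerm, Set.indicator_apply]

lemma killProb_eq_tsum : killProb V k w = ∑' l, killTerm V k w l := by
  classical
  unfold killProb
  refine (tsum_subtype {l | IsKillWalk V w l}
    (fun l => wt k l * ENNReal.ofReal (k (l.getLastD (0, 0))))).trans ?_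
  refine tsum_congr fun l => ?_
  simp [killTerm, Set.indicator_apply]

/-- A sum over lists whose summand vanishes unless the list starts at `w` is a sum over tails. -/
lemma tsum_cons (F : List (ℤ × ℤ) → ℝ≥0∞) (hF : ∀ l, l.head? ≠ some w → F l = 0) :
    ∑' l, F l = ∑' l, F (w :: l) := by
  symm
  refine Function.Injective.tsum_eq (g := fun l => w :: l) (List.cons_injective) ?_
  intro l hl
  have h : l.head? = some w := by
    by_contra h
    exact hl (hF l h)
  cases l with
  | nil => simp at h
  | cons x t => exact ⟨t, by simp_all⟩

lemma exitTerm_eq_zero {l : List (ℤ × ℤ)} (h : l.head? ≠ some w) : exitTerm V k E w l = 0 :=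
  if_neg fun h' => h h'.1

lemma killTerm_eq_zero {l : List (ℤ × ℤ)} (h : l.head? ≠ some w) : killTerm V k w l = 0 :=
  if_neg fun h' => h h'.1

/-- Among the six neighbours `w - o` of `w`, only the one equal to `x` contributes to a sum of
terms supported on walks starting at `x`. -/
lemma sum_offsets_cons (G : ℤ × ℤ → ℝ≥0∞) (x : ℤ × ℤ) (hG : ∀ y, x ≠ y → G y = 0)
    [Decidable (Adj w x)] :
    ∑ o ∈ offsets, G (w - o) = if Adj w x then G x else 0 := by
  classical
  have h : ∀ o ∈ offsets, G (w - o) = if o = w - x then G x else 0 := by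
    intro o _
    split_ifs with h
    · subst h; simp
    · exact hG _ fun h' => h (by rw [h']; abel)
  rw [Finset.sum_congr rfl h, Finset.sum_ite_eq']
  exact if_congr Iff.rfl rfl rfl

lemma wt_cons_cons (x : ℤ × ℤ) (t : List (ℤ × ℤ)) :
    wt k (w :: x :: t) = ENNReal.ofReal ((1 - k w) / 6) * wt k (x :: t) := by
  simp [wt]

lemma exitTerm_cons (hw : w ∈ V) (hwE : w ∉ E) (l : List (ℤ × ℤ)) :
    exitTerm V k E w (w :: l) =
      ENNReal.ofReal ((1 - k w) / 6) * ∑ o ∈ offsets, exitTerm V k E (w - o) l := by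
  classical
  cases l with
  | nil => simp [exitTerm, IsExitWalk, hwE]
  | cons x t =>
    rw [sum_offsets_cons (fun y => exitTerm V k E y (x :: t)) x
      fun y hy => exitTerm_eq_zero (by simpa using hy)]
    have : IsExitWalk V E w (w :: x :: t) ↔ Adj w x ∧ IsExitWalk V E x (x :: t) := by
      simp [IsExitWalk, List.Chain', List.isChain_cons_cons, hw, and_assoc]
    by_cases h1 : Adj w x <;> by_cases h2 : IsExitWalk V E x (x :: t) <;>
      simp [exitTerm, this, h1, h2, wt_cons_cons]

open Classical in
lemma killTerm_cons (hw : w ∈ V) (l : List (ℤ × ℤ)) :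
    killTerm V k w (w :: l) = (if l = [] then ENNReal.ofReal (k w) else 0) +
      ENNReal.ofReal ((1 - k w) / 6) * ∑ o ∈ offsets, killTerm V k (w - o) l := by
  cases l with
  | nil => simp [killTerm, IsKillWalk, List.Chain', hw, wt]
  | cons x t =>
    rw [sum_offsets_cons (fun y => killTerm V k y (x :: t)) x
      fun y hy => killTerm_eq_zero (by simpa using hy)]
    have : IsKillWalk V w (w :: x :: t) ↔ Adj w x ∧ IsKillWalk V x (x :: t) := by
      simp [IsKillWalk, List.Chain', List.isChain_cons_cons, hw, and_assoc]
    by_cases h1 : Adj w x <;> by_cases h2 : IsKillWalk V x (x :: t) <;>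
      simp [killTerm, this, h1, h2, wt_cons_cons, mul_assoc]

lemma H_step (hw : w ∈ V) (hwE : w ∉ E) :
    H V k w E = ENNReal.ofReal ((1 - k w) / 6) * ∑ o ∈ offsets, H V k (w - o) E := by
  simp only [H_eq_tsum]
  rw [tsum_cons (w := w) _ fun l hl => exitTerm_eq_zero hl]
  simp only [exitTerm_cons hw hwE]
  rw [ENNReal.tsum_mul_left, Summable.tsum_finsetSum fun _ _ => ENNReal.summable]

lemma killProb_step (hw : w ∈ V) :
    killProb V k w = ENNReal.ofReal (k w) +
      ENNReal.ofReal ((1 - k w) / 6) * ∑ o ∈ offsets, killProb V k (w - o) := by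
  classical
  simp only [killProb_eq_tsum]
  rw [tsum_cons (w := w) _ fun l hl => killTerm_eq_zero hl]
  simp only [killTerm_cons hw]
  rw [ENNReal.tsum_add, tsum_ite_eq, ENNReal.tsum_mul_left,
    Summable.tsum_finsetSum fun _ _ => ENNReal.summable]

lemma truncH_step (hw : w ∈ V) (hwE : w ∉ E) (n : ℕ) :
    truncH V k E (n + 1) w =
      ENNReal.ofReal ((1 - k w) / 6) * ∑ o ∈ offsets, truncH V k E n (w - o) := by
  unfold truncH
  rw [tsum_cons (w := w) _ fun l hl => by rw [exitTerm_eq_zero hl, ite_self]]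
  rw [← Summable.tsum_finsetSum fun _ _ => ENNReal.summable, ← ENNReal.tsum_mul_left]
  refine tsum_congr fun l => ?_
  by_cases h : l.length ≤ n <;> simp [h, exitTerm_cons hw hwE]

lemma truncH_zero : truncH V k E 0 w = 0 := by
  unfold truncH
  rw [ENNReal.tsum_eq_zero]
  intro l
  cases l <;> simp [exitTerm, IsExitWalk]

/-- Outside `V` the only possible exit walk is the one-vertex walk. -/
lemma exitTerm_cons_of_notMem (hw : w ∉ V) (l : List (ℤ × ℤ)) :
    exitTerm V k E w (w :: l) = if l = [] then exitTerm V k E w [w] else 0 := by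
  cases l with
  | nil => simp
  | cons x t => simp [exitTerm, IsExitWalk, hw]

lemma H_of_notMem (hw : w ∉ V) : H V k w E = exitTerm V k E w [w] := by
  classical
  rw [H_eq_tsum, tsum_cons (w := w) _ fun l hl => exitTerm_eq_zero hl]
  rw [tsum_congr (exitTerm_cons_of_notMem hw)]
  convert tsum_ite_eq ([] : List (ℤ × ℤ)) (fun _ => exitTerm V k E w [w]) using 1

lemma truncH_le_H (n : ℕ) : truncH V k E n w ≤ H V k w E := by
  rw [H_eq_tsum]
  refine ENNReal.tsum_le_tsum fun l => ?_
  split_ifs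
  exacts [le_rfl, zero_le]

lemma H_le_of_truncH_le {c : ℝ≥0∞} (h : ∀ n, truncH V k E n w ≤ c) : H V k w E ≤ c := by
  rw [H_eq_tsum]
  refine ENNReal.summable.tsum_le_of_sum_le fun s => le_trans ?_ (h (s.sup List.length))
  refine le_trans (Finset.sum_le_sum fun l hl => ?_) (ENNReal.sum_le_tsum s)
  rw [if_pos (Finset.le_sup (f := List.length) hl)]

/-- The one-vertex walk carries no factor, so its weight is independent of `k`. -/
lemma exitTerm_singleton_congr (k' : ℤ × ℤ → ℝ) :
    exitTerm V k E w [w] = exitTerm V k' E w [w] := by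
  simp [exitTerm, wt]

lemma exitTerm_singleton_le_one : exitTerm V k E w [w] ≤ 1 := by
  unfold exitTerm
  split_ifs <;> simp [wt]

lemma card_offsets : offsets.card = 6 := by decide

lemma six_mul_le {G : ℤ × ℤ → ℝ≥0∞} (hG : ∀ y, G y ≤ 1) {a : ℝ} (ha : 0 ≤ a) :
    ENNReal.ofReal (a / 6) * ∑ o ∈ offsets, G (w - o) ≤ ENNReal.ofReal a := by
  calc ENNReal.ofReal (a / 6) * ∑ o ∈ offsets, G (w - o)
      ≤ ENNReal.ofReal (a / 6) * ∑ o ∈ offsets, 1 := by gcongr; exact hG _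
    _ = ENNReal.ofReal (a / 6) * ENNReal.ofReal 6 := by simp [card_offsets]
    _ = ENNReal.ofReal a := by
      rw [← ENNReal.ofReal_mul (by positivity)]
      congr 1
      ring

lemma truncH_zero_mass_le_one (hE : Disjoint V E) (n : ℕ) (w : ℤ × ℤ) :
    truncH V (fun _ => 0) E n w ≤ 1 := by
  induction n generalizing w with
  | zero => simp [truncH_zero]
  | succ n ih =>
    by_cases hw : w ∈ V
    · rw [truncH_step hw (Set.disjoint_left.1 hE hw)]
      simpa using six_mul_le (w := w) ih (a := 1) zero_le_one
    · exact (truncH_le_H _).trans ((H_of_notMem hw).le.trans exitTerm_singleton_le_one)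

lemma truncH_le (hE : Disjoint V E) (hk : ∀ v ∈ V, k v ∈ Set.Icc (0 : ℝ) 1) (n : ℕ)
    (w : ℤ × ℤ) : truncH V (fun _ => 0) E n w ≤ H V k w E + killProb V k w := by
  induction n generalizing w with
  | zero => simp [truncH_zero]
  | succ n ih =>
    by_cases hw : w ∈ V
    · have hwE := Set.disjoint_left.1 hE hw
      obtain ⟨h0, h1⟩ := hk w hw
      -- A massless step is a surviving massive step or a killing.
      have hsplit : ENNReal.ofReal ((1 - 0) / 6) =
          ENNReal.ofReal ((1 - k w) / 6) + ENNReal.ofReal (k w / 6) := by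
        rw [← ENNReal.ofReal_add (by linarith) (by linarith)]
        congr 1
        ring
      rw [truncH_step hw hwE, H_step hw hwE, killProb_step hw, hsplit, add_mul, add_left_comm,
        ← mul_add, ← Finset.sum_add_distrib, add_comm]
      gcongr
      · exact six_mul_le (truncH_zero_mass_le_one hE n) h0
      · exact ih _
    · refine (truncH_le_H _).trans ?_
      rw [H_of_notMem hw, H_of_notMem hw, exitTerm_singleton_congr k]
      exact le_self_add

/-- Inequality (ineq_Hmtau): the massive harmonic measure of `E⁺` plus the killing
probability dominates the massless harmonic measure of `E⁺`. -/
theorem masslessHM_le_massiveHM_add_killProb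
    (V : Set (ℤ × ℤ)) (hVfin : V.Finite) (hVne : V.Nonempty)
    (k : ℤ × ℤ → ℝ) (hk : ∀ v ∈ V, k v ∈ Set.Icc (0 : ℝ) 1)
    (Eplus Eminus : Set (ℤ × ℤ))
    (hUnion : Eplus ∪ Eminus = bdry V) (hDisj : Disjoint Eplus Eminus)
    (w : ℤ × ℤ) (hw : w ∈ V) :
    H V (fun _ => 0) w Eplus ≤ H V k w Eplus + killProb V k w := by
  have hE : Disjoint V Eplus := by
    refine Set.disjoint_left.2 fun v hv hvE => ?_
    have : v ∈ bdry V := hUnion ▸ Or.inl hvE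
    exact this.1 hv
  exact H_le_of_truncH_le fun n => truncH_le hE hk n w

end MassiveHE
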